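/- The minimum cardinality of an ERR:LD set of the Petersen graph is 9; that is, the Petersen graph has an ERR:LD set of size 9, and every ERR:LD set of the Petersen graph has size at least 9. -/

import Mathlib

open scoped symmDiff

variable {V : Type*}

/-- The closed neighborhood `N[v]` of a vertex. -/
def closedNbhd (G : SimpleGraph V) (v : V) : Set V := insert v (G.neighborSet v)

/-- `S` is an error-correcting locating-dominating (ERR:LD) set: conditions (i)-(iv). -/
def IsErrLD (G : SimpleGraph V) (S : Set V) : Prop :=
  (∀ v : V, 3 ≤ (closedNbhd G v ∩ S).encard) ∧
  (∀ v ∈ S, ∀ u ∈ S, u ≠ v →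
    1 ≤ ((((G.neighborSet v ∩ S) ∆ (G.neighborSet u ∩ S)) \ {v, u}).encard)) ∧
  (∀ v ∉ S, ∀ u ∈ S,
    2 ≤ ((((G.neighborSet v ∩ S) ∆ (G.neighborSet u ∩ S)) \ {u}).encard)) ∧
  (∀ v ∉ S, ∀ u ∉ S, u ≠ v →
    3 ≤ (((G.neighborSet v ∩ S) ∆ (G.neighborSet u ∩ S)).encard))

/-- The Petersen graph as the Kneser graph `K(5,2)`: vertices are the 2-element
subsets of a 5-element set, adjacent iff disjoint. -/
def petersen : SimpleGraph {s : Finset (Fin 5) // s.card = 2} :=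
  SimpleGraph.fromRel (fun s t => Disjoint s.val t.val)

/-!
If any two vertices lie in a common closed neighborhood `N[w]` and `|N[w]| ≤ 4`, then condition (i)
leaves room for at most one vertex outside `S`. Conversely, when all degrees are at least 3 and no
open neighborhood `N(u)` is contained in another vertex's `N[v]`, any two vertices `u ≠ v` are
separated by two vertices other than `u` and `v`, one in `N(u)` and one in `N(v)`, so the complement
of any single vertex is an ERR:LD set.
-/

theorem mem_closedNbhd {G : SimpleGraph V} {u v : V} :
    u ∈ closedNbhd G v ↔ u = v ∨ G.Adj v u := Iff.rfl

theorem encard_closedNbhd (G : SimpleGraph V) (v : V) :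
    (closedNbhd G v).encard = (G.neighborSet v).encard + 1 :=
  Set.encard_insert_of_notMem (G.notMem_neighborSet_self)

theorem subsingleton_compl_of_le_encard_closedNbhd_inter {G : SimpleGraph V} {S : Set V} {k : ℕ}
    (hdeg : ∀ v, (G.neighborSet v).encard ≤ k)
    (hdiam : ∀ u v, ∃ w, u ∈ closedNbhd G w ∧ v ∈ closedNbhd G w)
    (hdom : ∀ v, k ≤ (closedNbhd G v ∩ S).encard) : Sᶜ.Subsingleton := by
  intro u hu v hv
  by_contra huv
  obtain ⟨w, huw, hvw⟩ := hdiam u v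
  have hout : 2 ≤ (closedNbhd G w \ S).encard :=
    (Set.encard_pair huv).symm.le.trans <|
      Set.encard_le_encard <| Set.pair_subset ⟨huw, hu⟩ ⟨hvw, hv⟩
  have hle : (k : ℕ∞) + 2 ≤ k + 1 := calc
    (k : ℕ∞) + 2 ≤ (closedNbhd G w ∩ S).encard + (closedNbhd G w \ S).encard :=
      add_le_add (hdom w) hout
    _ = (closedNbhd G w).encard := by
      rw [add_comm, Set.encard_sdiff_add_encard_inter]
    _ = (G.neighborSet w).encard + 1 := encard_closedNbhd G w
    _ ≤ k + 1 := by gcongr; exact hdeg w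
  norm_cast at hle
  omega

theorem two_le_encard_symmDiff_neighborSet_sdiff_pair {G : SimpleGraph V} {u v : V}
    (huv : ¬ G.neighborSet u ⊆ closedNbhd G v) (hvu : ¬ G.neighborSet v ⊆ closedNbhd G u) :
    2 ≤ ((G.neighborSet v ∆ G.neighborSet u) \ {v, u}).encard := by
  obtain ⟨a, hau, hav⟩ := Set.not_subset.mp huv
  obtain ⟨b, hbv, hbu⟩ := Set.not_subset.mp hvu
  rw [mem_closedNbhd, not_or] at hav hbu
  have hab : a ≠ b := by
    rintro rfl
    exact hav.2 hbv
  have ha : a ∉ ({v, u} : Set V) := by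
    rintro (rfl | rfl)
    exacts [hav.1 rfl, G.loopless.irrefl _ hau]
  have hb : b ∉ ({v, u} : Set V) := by
    rintro (rfl | rfl)
    exacts [G.loopless.irrefl _ hbv, hbu.1 rfl]
  rw [← Set.encard_pair hab]
  exact Set.encard_le_encard
    (Set.pair_subset ⟨Or.inr ⟨hau, hav.2⟩, ha⟩ ⟨Or.inl ⟨hbv, hbu.2⟩, hb⟩)

theorem le_encard_sdiff_singleton_of_add_one_le {s : Set V} {k : ℕ∞} (h : k + 1 ≤ s.encard)
    (x : V) : k ≤ (s \ {x}).encard :=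
  (ENat.add_le_add_iff_right ENat.one_ne_top).mp <| h.trans <| by
    simpa using Set.encard_le_encard_sdiff_add_encard s {x}

theorem isErrLD_compl_singleton {G : SimpleGraph V}
    (hdeg : ∀ v, 3 ≤ (G.neighborSet v).encard)
    (hsep : ∀ u v, u ≠ v → ¬ G.neighborSet u ⊆ closedNbhd G v) (x : V) :
    IsErrLD G {x}ᶜ := by
  have hinter (u v : V) : (G.neighborSet v ∩ {x}ᶜ) ∆ (G.neighborSet u ∩ {x}ᶜ) =
      (G.neighborSet v ∆ G.neighborSet u) \ {x} := by
    rw [← Set.inter_symmDiff_distrib_right, Set.sdiff_eq]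
  have htwo {u v : V} (huv : u ≠ v) :
      2 ≤ ((G.neighborSet v ∆ G.neighborSet u) \ {v, u}).encard :=
    two_le_encard_symmDiff_neighborSet_sdiff_pair (hsep u v huv) (hsep v u huv.symm)
  refine ⟨fun v ↦ ?_, fun v _ u _ huv ↦ ?_, fun v hv u hu ↦ ?_, fun v hv u hu huv ↦ ?_⟩
  · refine le_encard_sdiff_singleton_of_add_one_le ?_ x
    rw [encard_closedNbhd]
    gcongr
    exact hdeg v
  · rw [hinter, Set.sdiff_sdiff_comm]
    exact le_encard_sdiff_singleton_of_add_one_le (htwo huv) x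
  · obtain rfl : v = x := not_not.mp hv
    rw [hinter, Set.sdiff_sdiff, Set.singleton_union]
    exact htwo hu
  · exact absurd ((not_not.mp hu).trans (not_not.mp hv).symm) huv

theorem errLD_petersen_general {G : SimpleGraph V} {n : ℕ} (hn : Nat.card V = n + 1)
    (hdeg : ∀ v, (G.neighborSet v).encard = 3)
    (hdiam : ∀ u v, ∃ w, u ∈ closedNbhd G w ∧ v ∈ closedNbhd G w)
    (hsep : ∀ u v, u ≠ v → ¬ G.neighborSet u ⊆ closedNbhd G v) :
    (∃ S : Set V, IsErrLD G S ∧ S.ncard = n) ∧ ∀ S : Set V, IsErrLD G S → n ≤ S.ncard := by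
  have : Finite V := Nat.finite_of_card_ne_zero (by omega)
  obtain ⟨x⟩ : Nonempty V := (Nat.card_pos_iff.mp (by omega)).1
  refine ⟨⟨{x}ᶜ, isErrLD_compl_singleton (fun v ↦ (hdeg v).ge) hsep x, ?_⟩, fun S hS ↦ ?_⟩
  · rw [Set.ncard_compl, Set.ncard_singleton, hn, Nat.add_sub_cancel]
  · have hcompl : Sᶜ.ncard ≤ 1 := Set.ncard_le_one_iff_subsingleton.mpr <|
      subsingleton_compl_of_le_encard_closedNbhd_inter (fun v ↦ (hdeg v).le) hdiam hS.1
    have := Set.ncard_add_ncard_compl S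
    omega

theorem petersen_adj {s t : {s : Finset (Fin 5) // s.card = 2}} :
    petersen.Adj s t ↔ Disjoint s.val t.val := by
  rw [petersen, SimpleGraph.fromRel_adj, disjoint_comm (a := t.val), or_self, and_iff_right_iff_imp]
  rintro hdisj rfl
  simpa [disjoint_self.mp hdisj] using s.property

theorem card_vertices_petersen : Nat.card {s : Finset (Fin 5) // s.card = 2} = 10 := by
  rw [Nat.card_eq_fintype_card, Fintype.card_finset_len]
  rfl

theorem encard_neighborSet_petersen (s : {s : Finset (Fin 5) // s.card = 2}) :
    (petersen.neighborSet s).encard = 3 := by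
  have himage : Subtype.val '' petersen.neighborSet s = (s.valᶜ.powersetCard 2 : Set _) := by
    ext t
    simp [petersen_adj, Finset.subset_compl_iff_disjoint_left]
  rw [← Subtype.val_injective.encard_image, himage, Set.encard_coe_eq_coe_finsetCard,
    Finset.card_powersetCard, Finset.card_compl, s.property]
  rfl

theorem exists_common_closedNbhd_petersen (s t : {s : Finset (Fin 5) // s.card = 2}) :
    ∃ u, s ∈ closedNbhd petersen u ∧ t ∈ closedNbhd petersen u := by
  simp only [mem_closedNbhd, petersen_adj]
  by_cases hdisj : Disjoint s.val t.val
  · exact ⟨s, Or.inl rfl, Or.inr hdisj⟩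
  have hinter : 0 < (s.val ∩ t.val).card :=
    Finset.card_pos.mpr (Finset.not_disjoint_iff_nonempty_inter.mp hdisj)
  have hcompl : 2 ≤ (s.val ∪ t.val)ᶜ.card := by
    have := Finset.card_union_add_card_inter s.val t.val
    rw [Finset.card_compl, Fintype.card_fin]
    omega
  obtain ⟨u, hu, hcard⟩ := Finset.exists_subset_card_eq hcompl
  rw [Finset.subset_compl_iff_disjoint_right, Finset.disjoint_union_right] at hu
  exact ⟨⟨u, hcard⟩, Or.inr hu.1, Or.inr hu.2⟩

theorem not_neighborSet_petersen_subset_closedNbhd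
    (s t : {s : Finset (Fin 5) // s.card = 2}) (hst : s ≠ t) :
    ¬ petersen.neighborSet s ⊆ closedNbhd petersen t := by
  obtain ⟨x, hxt, hxs⟩ : ∃ x ∈ t.val, x ∉ s.val := by
    by_contra! hsub
    exact hst (Subtype.ext
      (Finset.eq_of_subset_of_card_le hsub (by rw [s.property, t.property])).symm)
  obtain ⟨y, hy⟩ : ∃ y, y ∉ s.val ∪ t.val := by
    by_contra! hall
    have := Finset.card_union_le s.val t.val
    rw [Finset.eq_univ_of_forall hall, Finset.card_fin] at this
    omega
  rw [Finset.notMem_union] at hy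
  let u : {s : Finset (Fin 5) // s.card = 2} :=
    ⟨{x, y}, Finset.card_pair fun hxy ↦ hy.2 (hxy ▸ hxt)⟩
  refine Set.not_subset.mpr ⟨u, petersen_adj.mpr ?_, ?_⟩
  · simp [u, hxs, hy.1]
  · rw [mem_closedNbhd, petersen_adj, not_or]
    refine ⟨fun hut ↦ hy.2 ?_, Finset.not_disjoint_iff.mpr ⟨x, hxt, by simp [u]⟩⟩
    simp [← hut, u]

theorem errLD_petersen :
    (∃ S : Set {s : Finset (Fin 5) // s.card = 2},
      IsErrLD petersen S ∧ S.ncard = 9) ∧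
    (∀ S : Set {s : Finset (Fin 5) // s.card = 2},
      IsErrLD petersen S → 9 ≤ S.ncard) :=
  errLD_petersen_general card_vertices_petersen encard_neighborSet_petersen
    exists_common_closedNbhd_petersen not_neighborSet_petersen_subset_closedNbhd
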